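/- For contact angle γ = π/2 and any C > 0, the second derivative of the dimensionless total force is strictly positive on (0, π/2): for every φ ∈ (0, π/2), F″(φ) = 2·cos φ + C·cos(φ/2 + π/4)·sin φ + 4·C·sin(3φ/2 + π/4) + 2·C²·sin(2φ) > 0. -/

import Mathlib

/-!
The addition formula at `(3φ + γ)/2 = (φ + γ)/2 + φ` collects the product terms of `F″` so that,
for `C ≥ 0`, each summand is a nonnegative multiple of sines and cosines. If `0 < φ < π/2` and
`0 < φ + γ < π`, then every angle under a sine lies in `(0, π)` and the one under the cosine in
`(0, π/2)`: in particular `(3φ + γ)/2 < π/2 + φ < π`. For `γ = π/2` the condition on `φ + γ` holds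
on all of `(0, π/2)`.
-/

open Real Set

/-- The dimensionless total force at contact angle `γ`, as a function of the angle `φ` and the
dimensionless parameters `A` and `C`. -/
noncomputable def totalForce (A C γ φ : ℝ) : ℝ :=
  -A * C ^ 2 - 2 * sin (φ + γ) - 4 * C * cos ((φ + γ) / 2) * sin φ
    - (1 / 2) * C ^ 2 * sin (2 * φ) + C ^ 2 * φ

theorem hasDerivAt_add_div_two (γ φ : ℝ) : HasDerivAt (fun x => (x + γ) / 2) (1 / 2) φ :=
  ((hasDerivAt_id φ).add_const γ).div_const 2

theorem hasDerivAt_totalForce (A C γ φ : ℝ) :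
    HasDerivAt (totalForce A C γ)
      (-2 * cos (φ + γ) + 2 * C * sin ((φ + γ) / 2) * sin φ
        - 4 * C * cos ((φ + γ) / 2) * cos φ - C ^ 2 * cos (2 * φ) + C ^ 2) φ := by
  have shift_term := ((hasDerivAt_sin (φ + γ)).comp_add_const φ γ).const_mul 2
  have half_term := ((hasDerivAt_add_div_two γ φ).cos.const_mul (4 * C)).mul (hasDerivAt_sin φ)
  have double_term := (hasDerivAt_const_mul (x := φ) 2).sin.const_mul ((1 / 2) * C ^ 2)
  have linear_term := hasDerivAt_const_mul (x := φ) (C ^ 2)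
  refine ((((shift_term.const_sub (-A * C ^ 2)).sub half_term).sub double_term).add
    linear_term).congr_deriv ?_
  ring

theorem deriv_totalForce (A C γ : ℝ) :
    deriv (totalForce A C γ) = fun φ =>
      -2 * cos (φ + γ) + 2 * C * sin ((φ + γ) / 2) * sin φ
        - 4 * C * cos ((φ + γ) / 2) * cos φ - C ^ 2 * cos (2 * φ) + C ^ 2 :=
  funext fun φ => (hasDerivAt_totalForce A C γ φ).deriv

theorem hasDerivAt_deriv_totalForce (A C γ φ : ℝ) :
    HasDerivAt (deriv (totalForce A C γ))
      (2 * sin (φ + γ) + C * cos ((φ + γ) / 2) * sin φ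
        + 4 * C * sin ((3 * φ + γ) / 2) + 2 * C ^ 2 * sin (2 * φ)) φ := by
  have shift_term := ((hasDerivAt_cos (φ + γ)).comp_add_const φ γ).const_mul (-2)
  have half_sin_term :=
    ((hasDerivAt_add_div_two γ φ).sin.const_mul (2 * C)).mul (hasDerivAt_sin φ)
  have half_cos_term :=
    ((hasDerivAt_add_div_two γ φ).cos.const_mul (4 * C)).mul (hasDerivAt_cos φ)
  have double_term := (hasDerivAt_const_mul (x := φ) 2).cos.const_mul (C ^ 2)
  have sin_triple : sin ((3 * φ + γ) / 2) =
      sin ((φ + γ) / 2) * cos φ + cos ((φ + γ) / 2) * sin φ := by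
    rw [← sin_add]
    ring_nf
  rw [deriv_totalForce]
  refine ((((shift_term.add half_sin_term).sub half_cos_term).sub double_term).add_const
    (C ^ 2)).congr_deriv ?_
  rw [sin_triple]
  ring

theorem total_force_second_deriv_pos_general (A : ℝ) {C γ φ : ℝ} (hC : 0 ≤ C)
    (hφ : φ ∈ Ioo 0 (π / 2)) (hφγ : φ + γ ∈ Ioo 0 π) :
    deriv (deriv (totalForce A C γ)) φ =
        2 * sin (φ + γ) + C * cos ((φ + γ) / 2) * sin φ
          + 4 * C * sin ((3 * φ + γ) / 2) + 2 * C ^ 2 * sin (2 * φ) ∧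
      0 < 2 * sin (φ + γ) + C * cos ((φ + γ) / 2) * sin φ
          + 4 * C * sin ((3 * φ + γ) / 2) + 2 * C ^ 2 * sin (2 * φ) := by
  refine ⟨(hasDerivAt_deriv_totalForce A C γ φ).deriv, ?_⟩
  obtain ⟨hφ_pos, hφ_lt⟩ := hφ
  have sin_shift_pos : 0 < sin (φ + γ) := sin_pos_of_mem_Ioo hφγ
  obtain ⟨hφγ_pos, hφγ_lt⟩ := hφγ
  have sin_self_pos : 0 < sin φ := sin_pos_of_mem_Ioo ⟨hφ_pos, by linarith⟩
  have cos_half_pos : 0 < cos ((φ + γ) / 2) := cos_pos_of_mem_Ioo ⟨by linarith, by linarith⟩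
  have sin_triple_pos : 0 < sin ((3 * φ + γ) / 2) :=
    sin_pos_of_mem_Ioo ⟨by linarith, by linarith⟩
  have sin_double_pos : 0 < sin (2 * φ) := sin_pos_of_mem_Ioo ⟨by linarith, by linarith⟩
  positivity

/-- For `γ = π/2` and any `C > 0`, the second derivative of the dimensionless total force is
strictly positive on `(0, π/2)`, with the explicit formula
`F″(φ) = 2·cos φ + C·cos(φ/2 + π/4)·sin φ + 4·C·sin(3φ/2 + π/4) + 2·C²·sin(2φ)`. -/
theorem total_force_second_deriv_pos (A C : ℝ) (hA : 0 < A) (hC : 0 < C)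
    (F : ℝ → ℝ)
    (hF : F = fun φ => -A * C ^ 2 - 2 * Real.sin (φ + Real.pi / 2)
      - 4 * C * Real.cos ((φ + Real.pi / 2) / 2) * Real.sin φ
      - (1 / 2) * C ^ 2 * Real.sin (2 * φ) + C ^ 2 * φ) :
    ∀ φ ∈ Set.Ioo (0 : ℝ) (Real.pi / 2),
      deriv (deriv F) φ = 2 * Real.cos φ + C * Real.cos (φ / 2 + Real.pi / 4) * Real.sin φ
        + 4 * C * Real.sin (3 * φ / 2 + Real.pi / 4) + 2 * C ^ 2 * Real.sin (2 * φ) ∧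
      0 < 2 * Real.cos φ + C * Real.cos (φ / 2 + Real.pi / 4) * Real.sin φ
        + 4 * C * Real.sin (3 * φ / 2 + Real.pi / 4) + 2 * C ^ 2 * Real.sin (2 * φ) := by
  intro φ hφ
  have h := total_force_second_deriv_pos_general A (γ := π / 2) hC.le hφ
    ⟨by linarith [hφ.1, pi_pos], by linarith [hφ.2]⟩
  rw [sin_add_pi_div_two, show (φ + π / 2) / 2 = φ / 2 + π / 4 by ring,
    show (3 * φ + π / 2) / 2 = 3 * φ / 2 + π / 4 by ring] at h
  rw [hF]
  exact h
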